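/- arXiv:math-ph/0012023 — 2 statements merged into one kernel-verified Lean document; each statement's English description precedes it below -/
import Mathlib

section
/- Supremum representation of the rate functional: for every f ∈ L²(Λ,θ;ℝ^d), I(f) = sup_{r ∈ ℕ} I(f^r), where f^r = Σ_{k=1}^{γ_r} (γ_r ∫_{D_{r,k}} f dθ) 1_{D_{r,k}}. In particular, I(f^r) ≤ I(f) for all r and liminf_{r→∞} I(f^r) ≥ I(f). -/
open MeasureTheory Filter Topology ENNReal

lemma jensen_aux {Λ : Type*} [MeasurableSpace Λ] {E : Type*} [NormedAddCommGroup E]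
    [NormedSpace ℝ E] [CompleteSpace E] [MeasurableSpace E] [BorelSpace E]
    (μ : Measure Λ) [IsProbabilityMeasure μ] (i : E → ℝ≥0∞)
    (hilsc : LowerSemicontinuous i)
    (hiconv : ∀ x y : E, ∀ t : ℝ, 0 ≤ t → t ≤ 1 →
      i (t • x + (1 - t) • y) ≤ ENNReal.ofReal t * i x + ENNReal.ofReal (1 - t) * i y)
    (f : Λ → E) (hf : Integrable f μ) : i (∫ x, f x ∂μ) ≤ ∫⁻ x, i (f x) ∂μ := by
  by_cases htop : ∫⁻ x, i (f x) ∂μ = ∞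
  · rw [htop]; exact le_top
  have him : AEMeasurable (fun x => i (f x)) μ :=
    hilsc.measurable.comp_aemeasurable hf.aestronglyMeasurable.aemeasurable
  have hfin := ae_lt_top' him htop
  set S : Set (E × ℝ) := {p | i p.1 ≤ ENNReal.ofReal p.2 ∧ 0 ≤ p.2} with hS
  have hSc : IsClosed S := by
    have h1 : IsClosed {q : E × ℝ≥0∞ | i q.1 ≤ q.2} := hilsc.isClosed_epigraph
    have h2 : Continuous (fun p : E × ℝ => (p.1, ENNReal.ofReal p.2)) :=
      continuous_fst.prodMk (ENNReal.continuous_ofReal.comp continuous_snd)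
    exact (h1.preimage h2).inter (isClosed_le continuous_const continuous_snd)
  have hSconv : Convex ℝ S := by
    rintro ⟨x, s⟩ ⟨hx, hs⟩ ⟨y, t⟩ ⟨hy, ht⟩ a b ha hb hab
    obtain rfl : b = 1 - a := by linarith
    simp only at hx hs hy ht
    refine ⟨?_, ?_⟩
    · simp only [Prod.smul_mk, Prod.mk_add_mk, smul_eq_mul]
      refine (hiconv x y a ha (by linarith)).trans ?_
      rw [ENNReal.ofReal_add (by positivity) (by positivity), ENNReal.ofReal_mul ha,
        ENNReal.ofReal_mul hb]
      gcongr
    · simp only [Prod.smul_mk, Prod.mk_add_mk, smul_eq_mul]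
      positivity
  have hint : Integrable (fun x => (i (f x)).toReal) μ := integrable_toReal_of_lintegral_ne_top him htop
  have hmem : ∀ᵐ x ∂μ, (f x, (i (f x)).toReal) ∈ S := by
    filter_upwards [hfin] with x hx
    exact ⟨by simp [ENNReal.ofReal_toReal hx.ne], ENNReal.toReal_nonneg⟩
  have := hSconv.integral_mem hSc hmem (hf.prodMk hint)
  rw [integral_pair hf hint] at this
  refine this.1.trans ?_
  simp only
  rw [integral_toReal him hfin, ENNReal.ofReal_toReal htop]

section
variable {Λ : Type*} [MeasurableSpace Λ] {E : Type*} [NormedAddCommGroup E] [NormedSpace ℝ E]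

/-- Block average over a partition. -/
noncomputable def blockAvg (θ : Measure Λ) {n : ℕ} (D : Fin n → Set Λ) (f : Λ → E) (x : Λ) : E :=
  ∑ k : Fin n, Set.indicator (D k) (fun _ => (n : ℝ) • ∫ y in D k, f y ∂θ) x

lemma blockAvg_eq (θ : Measure Λ) {n : ℕ} (D : Fin n → Set Λ)
    (hdisj : ∀ k k' : Fin n, k ≠ k' → Disjoint (D k) (D k')) (f : Λ → E) {x : Λ} {k : Fin n}
    (hx : x ∈ D k) : blockAvg θ D f x = (n : ℝ) • ∫ y in D k, f y ∂θ := by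
  unfold blockAvg
  rw [Finset.sum_eq_single k]
  · simp [hx]
  · intro b _ hb
    exact Set.indicator_of_notMem (fun h => (Set.disjoint_left.1 (hdisj b k hb) h hx)) _
  · simp

lemma blockAvg_eq' (θ : Measure Λ) {n : ℕ} (D : Fin n → Set Λ)
    (hdisj : ∀ k k' : Fin n, k ≠ k' → Disjoint (D k) (D k'))
    (hmeas : ∀ k, θ (D k) = 1 / (n : ℝ≥0∞)) (f : Λ → E) {x : Λ} {k : Fin n}
    (hx : x ∈ D k) : blockAvg θ D f x = ⨍ y in D k, f y ∂θ := by
  rw [blockAvg_eq θ D hdisj f hx, setAverage_eq, Measure.real, hmeas]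
  simp

lemma blockAvg_meas (θ : Measure Λ) {n : ℕ} (D : Fin n → Set Λ) (hD : ∀ k, MeasurableSet (D k))
    (f : Λ → E) : StronglyMeasurable (blockAvg θ D f) := by
  unfold blockAvg
  exact Finset.stronglyMeasurable_fun_sum _
    (fun k _ => stronglyMeasurable_const.indicator (hD k))

lemma blockAvg_jensen [CompleteSpace E] [MeasurableSpace E] [BorelSpace E]
    (θ : Measure Λ) [IsProbabilityMeasure θ] {n : ℕ} (D : Fin n → Set Λ)
    (hD : ∀ k, MeasurableSet (D k))
    (hdisj : ∀ k k' : Fin n, k ≠ k' → Disjoint (D k) (D k'))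
    (hcover : (⋃ k, D k) = Set.univ)
    (hmeas : ∀ k, θ (D k) = 1 / (n : ℝ≥0∞))
    (i : E → ℝ≥0∞)
    (hilsc : LowerSemicontinuous i)
    (hiconv : ∀ x y : E, ∀ t : ℝ, 0 ≤ t → t ≤ 1 →
      i (t • x + (1 - t) • y) ≤ ENNReal.ofReal t * i x + ENNReal.ofReal (1 - t) * i y)
    (f : Λ → E) (hf : Integrable f θ) :
    ∫⁻ x, i (blockAvg θ D f x) ∂θ ≤ ∫⁻ x, i (f x) ∂θ := by
  have key : ∀ g : Λ → ℝ≥0∞, ∫⁻ x, g x ∂θ = ∑ k, ∫⁻ x in D k, g x ∂θ := by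
    intro g
    rw [← tsum_fintype (L := .unconditional _), ← lintegral_iUnion hD (fun a b h => hdisj a b h), hcover, Measure.restrict_univ]
  rw [key, key]
  refine Finset.sum_le_sum fun k _ => ?_
  have h0 : θ (D k) ≠ 0 := by rw [hmeas]; simp
  have h1 : θ (D k) ≠ ∞ := measure_ne_top _ _
  rw [setLIntegral_congr_fun (g := fun _ => i (⨍ y in D k, f y ∂θ)) (hD k)
    (fun x hx => by simp only [blockAvg_eq' θ D hdisj hmeas f hx])]
  rw [setLIntegral_const]
  have : IsProbabilityMeasure ((θ (D k))⁻¹ • θ.restrict (D k)) :=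
    ⟨by simp [ENNReal.inv_mul_cancel h0 h1]⟩
  have hJ := jensen_aux ((θ (D k))⁻¹ • θ.restrict (D k)) i hilsc hiconv f
    (hf.restrict.smul_measure (by simpa using h0))
  rw [lintegral_smul_measure] at hJ
  have e : (⨍ y in D k, f y ∂θ) = ∫ y, f y ∂((θ (D k))⁻¹ • θ.restrict (D k)) := by
    rw [average_eq', Measure.restrict_apply_univ]
  rw [e]
  calc _ ≤ ((θ (D k))⁻¹ • ∫⁻ x in D k, i (f x) ∂θ) * θ (D k) := by gcongr
    _ = _ := by
      rw [smul_eq_mul, mul_comm, ← mul_assoc, ENNReal.mul_inv_cancel h0 h1, one_mul]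

lemma blockAvg_sub (θ : Measure Λ) {n : ℕ} (D : Fin n → Set Λ) (f g : Λ → E)
    (hf : Integrable f θ) (hg : Integrable g θ) (x : Λ) :
    blockAvg θ D (fun y => f y - g y) x = blockAvg θ D f x - blockAvg θ D g x := by
  unfold blockAvg
  rw [← Finset.sum_sub_distrib]
  refine Finset.sum_congr rfl fun k _ => ?_
  rw [integral_sub hf.restrict hg.restrict, smul_sub]
  by_cases h : x ∈ D k <;> simp [h]

end

lemma enorm_convex {E : Type*} [NormedAddCommGroup E] [NormedSpace ℝ E] (x y : E) (t : ℝ)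
    (h0 : 0 ≤ t) (h1 : t ≤ 1) :
    ‖t • x + (1 - t) • y‖ₑ ≤ ENNReal.ofReal t * ‖x‖ₑ + ENNReal.ofReal (1 - t) * ‖y‖ₑ := by
  refine (enorm_add_le _ _).trans ?_
  rw [enorm_smul, enorm_smul, Real.enorm_of_nonneg h0, Real.enorm_of_nonneg (by linarith)]

section
variable {Λ : Type*} [MetricSpace Λ] [MeasurableSpace Λ] [BorelSpace Λ]
  {E : Type*} [NormedAddCommGroup E] [NormedSpace ℝ E] [CompleteSpace E]
  [MeasurableSpace E] [BorelSpace E]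

lemma blockAvg_tendsto_cont (θ : Measure Λ) [IsProbabilityMeasure θ]
    (γ : ℕ → ℕ) 
    (D : (r : ℕ) → Fin (γ r) → Set Λ)
    (hDmeas : ∀ r k, MeasurableSet (D r k))
    (hDdisj : ∀ r, ∀ k k' : Fin (γ r), k ≠ k' → Disjoint (D r k) (D r k'))
    (hDcover : ∀ r, (⋃ k, D r k) = Set.univ)
    (hDmeasure : ∀ r k, θ (D r k) = 1 / (γ r : ℝ≥0∞))
    (hDdiam : Tendsto (fun r => ⨆ k : Fin (γ r), Metric.ediam (D r k)) atTop (𝓝 0))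
    (g : Λ → E) (hg : Integrable g θ) (hgc : Continuous g) (x : Λ) :
    Tendsto (fun r => blockAvg θ (D r) g x) atTop (𝓝 (g x)) := by
  rw [Metric.tendsto_nhds]
  intro ε hε
  obtain ⟨δ, hδ, h⟩ := Metric.continuous_iff.1 hgc x (ε / 2) (by positivity)
  filter_upwards [hDdiam.eventually_lt_const (ENNReal.ofReal_pos.2 hδ)] with r hr
  obtain ⟨k, hk⟩ := Set.mem_iUnion.1 (by rw [hDcover r]; trivial : x ∈ ⋃ k, D r k)
  rw [blockAvg_eq' θ (D r) (hDdisj r) (hDmeasure r) g hk]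
  have h0 : θ (D r k) ≠ 0 := by rw [hDmeasure]; simp
  have hmem : (⨍ y in D r k, g y ∂θ) ∈ Metric.closedBall (g x) (ε / 2) := by
    refine (convex_closedBall _ _).set_average_mem Metric.isClosed_closedBall h0
      (measure_ne_top _ _) ?_ hg.integrableOn
    refine (ae_restrict_iff' (hDmeas r k)).2 (Eventually.of_forall fun y hy => ?_)
    refine (h y ?_).le
    have h2 : edist y x < ENNReal.ofReal δ :=
      ((Metric.edist_le_ediam_of_mem hy hk).trans
        (le_iSup (fun k => Metric.ediam (D r k)) k)).trans_lt hr
    exact edist_lt_ofReal.1 h2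
  exact (Metric.mem_closedBall.1 hmem).trans_lt (by linarith)

lemma blockAvg_tendsto_L1 [SecondCountableTopology E] (θ : Measure Λ) [IsProbabilityMeasure θ]
    (γ : ℕ → ℕ) 
    (D : (r : ℕ) → Fin (γ r) → Set Λ)
    (hDmeas : ∀ r k, MeasurableSet (D r k))
    (hDdisj : ∀ r, ∀ k k' : Fin (γ r), k ≠ k' → Disjoint (D r k) (D r k'))
    (hDcover : ∀ r, (⋃ k, D r k) = Set.univ)
    (hDmeasure : ∀ r k, θ (D r k) = 1 / (γ r : ℝ≥0∞))
    (hDdiam : Tendsto (fun r => ⨆ k : Fin (γ r), Metric.ediam (D r k)) atTop (𝓝 0))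
    (f : Λ → E) (hf : Integrable f θ) :
    Tendsto (fun r => ∫⁻ x, ‖blockAvg θ (D r) f x - f x‖ₑ ∂θ) atTop (𝓝 0) := by
  rw [ENNReal.tendsto_nhds_zero]
  intro ε hε
  have hε3 : ε / 3 ≠ 0 := (ENNReal.div_pos hε.ne' (by simp)).ne'
  obtain ⟨g, hg1, hg2⟩ := (memLp_one_iff_integrable.2 hf).exists_boundedContinuous_eLpNorm_sub_le
    (by simp) hε3
  rw [memLp_one_iff_integrable] at hg2
  rw [eLpNorm_one_eq_lintegral_enorm] at hg1
  simp only [Pi.sub_apply] at hg1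
  have hA : Tendsto (fun r => ∫⁻ x, ‖blockAvg θ (D r) g x - g x‖ₑ ∂θ) atTop (𝓝 0) := by
    have hb : ∀ r x, ‖blockAvg θ (D r) g x‖ ≤ ‖g‖ := by
      intro r x
      obtain ⟨k, hk⟩ := Set.mem_iUnion.1 (by rw [hDcover r]; trivial : x ∈ ⋃ k, D r k)
      rw [blockAvg_eq' θ (D r) (hDdisj r) (hDmeasure r) g hk]
      have h0 : θ (D r k) ≠ 0 := by rw [hDmeasure]; simp
      have hmem : (⨍ y in D r k, g y ∂θ) ∈ Metric.closedBall (0 : E) ‖g‖ := by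
        refine (convex_closedBall _ _).set_average_mem Metric.isClosed_closedBall h0
          (measure_ne_top _ _) ?_ hg2.integrableOn
        exact Eventually.of_forall fun y => by simpa using g.norm_coe_le_norm y
      simpa using hmem
    have := tendsto_lintegral_of_dominated_convergence' (μ := θ)
      (F := fun r x => ‖blockAvg θ (D r) g x - g x‖ₑ) (f := fun _ => 0)
      (fun _ => ENNReal.ofReal (‖g‖ + ‖g‖)) ?_ ?_ ?_ ?_
    · simpa using this
    · intro r
      exact ((blockAvg_meas θ (D r) (hDmeas r) g).aestronglyMeasurable.sub
        hg2.aestronglyMeasurable).enorm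
    · intro r
      refine Eventually.of_forall fun x => ?_
      simp only
      rw [← ofReal_norm_eq_enorm]
      exact ENNReal.ofReal_le_ofReal ((norm_sub_le _ _).trans
        (add_le_add (hb r x) (g.norm_coe_le_norm x)))
    · simp [ENNReal.mul_eq_top]
    · refine Eventually.of_forall fun x => ?_
      have h := (blockAvg_tendsto_cont θ γ D hDmeas hDdisj hDcover hDmeasure hDdiam g hg2
        g.continuous x).sub_const (g x)
      simpa using h.enorm
  filter_upwards [ENNReal.tendsto_nhds_zero.1 hA (ε / 3) (pos_iff_ne_zero.2 hε3)] with r hr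
  have hB : ∫⁻ x, ‖blockAvg θ (D r) f x - blockAvg θ (D r) g x‖ₑ ∂θ ≤ ε / 3 := by
    refine le_trans ?_ hg1
    have := blockAvg_jensen θ (D r) (hDmeas r) (hDdisj r) (hDcover r) (hDmeasure r)
      (fun x : E => ‖x‖ₑ) continuous_enorm.lowerSemicontinuous enorm_convex
      (fun y => f y - g y) (hf.sub hg2)
    simpa only [blockAvg_sub θ (D r) f g hf hg2] using this
  have m1 := ((blockAvg_meas θ (D r) (hDmeas r) f).aestronglyMeasurable (μ := θ).sub
    (blockAvg_meas θ (D r) (hDmeas r) g).aestronglyMeasurable).enorm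
  have m2 := ((blockAvg_meas θ (D r) (hDmeas r) g).aestronglyMeasurable (μ := θ).sub
        hg2.aestronglyMeasurable).enorm
  calc ∫⁻ x, ‖blockAvg θ (D r) f x - f x‖ₑ ∂θ
      ≤ ∫⁻ x, (‖blockAvg θ (D r) f x - blockAvg θ (D r) g x‖ₑ
          + (‖blockAvg θ (D r) g x - g x‖ₑ + ‖f x - g x‖ₑ)) ∂θ := by
        refine lintegral_mono fun x => ?_
        have e : blockAvg θ (D r) f x - f x = (blockAvg θ (D r) f x - blockAvg θ (D r) g x)
          + ((blockAvg θ (D r) g x - g x) + (g x - f x)) := by abel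
        simp only
        rw [e]
        refine (enorm_add_le _ _).trans ?_
        gcongr
        refine (enorm_add_le _ _).trans ?_
        rw [enorm_sub_rev (g x)]
    _ = ∫⁻ x, ‖blockAvg θ (D r) f x - blockAvg θ (D r) g x‖ₑ ∂θ
          + (∫⁻ x, ‖blockAvg θ (D r) g x - g x‖ₑ ∂θ + ∫⁻ x, ‖f x - g x‖ₑ ∂θ) := by
        simp only [Pi.sub_apply] at m1 m2
        rw [lintegral_add_left' m1, lintegral_add_left' m2]
    _ ≤ ε / 3 + (ε / 3 + ε / 3) := by gcongr
    _ = ε := by rw [← add_assoc]; exact ENNReal.add_thirds ε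
end

/-- Supremum representation of the rate functional: for every `f ∈ L²(Λ,θ;ℝ^d)`,
`I(f) = sup_{r} I(f^r)`, where `f^r = Σ_k (γ_r ∫_{D_{r,k}} f dθ) 1_{D_{r,k}}`.
In particular `I(f^r) ≤ I(f)` for all `r` and `liminf_{r→∞} I(f^r) ≥ I(f)`. -/
theorem rate_functional_sup_representation
    {Λ : Type*} [MetricSpace Λ] [TopologicalSpace.SeparableSpace Λ] [CompleteSpace Λ]
    [MeasurableSpace Λ] [BorelSpace Λ]
    (θ : Measure Λ) [IsProbabilityMeasure θ]
    (d : ℕ) (hd : 0 < d)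
    (i : EuclideanSpace ℝ (Fin d) → ℝ≥0∞)
    (hilsc : LowerSemicontinuous i)
    (hiconv : ∀ x y : EuclideanSpace ℝ (Fin d), ∀ t : ℝ, 0 ≤ t → t ≤ 1 →
      i (t • x + (1 - t) • y) ≤ ENNReal.ofReal t * i x + ENNReal.ofReal (1 - t) * i y)
    (I : Lp (EuclideanSpace ℝ (Fin d)) 2 θ → ℝ≥0∞)
    (hI : ∀ f, I f = ∫⁻ x, i (f x) ∂θ)
    (γ : ℕ → ℕ) (hγpos : ∀ r, 0 < γ r) (hγtop : Tendsto γ atTop atTop)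
    (D : (r : ℕ) → Fin (γ r) → Set Λ)
    (hDmeas : ∀ r k, MeasurableSet (D r k))
    (hDdisj : ∀ r, ∀ k k' : Fin (γ r), k ≠ k' → Disjoint (D r k) (D r k'))
    (hDcover : ∀ r, (⋃ k, D r k) = Set.univ)
    (hDmeasure : ∀ r k, θ (D r k) = 1 / (γ r : ℝ≥0∞))
    (hDdiam : Tendsto (fun r => ⨆ k : Fin (γ r), EMetric.diam (D r k)) atTop (𝓝 0))
    (f : Lp (EuclideanSpace ℝ (Fin d)) 2 θ)
    (fr : ℕ → Λ → EuclideanSpace ℝ (Fin d))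
    (hfr : ∀ r x, fr r x = ∑ k : Fin (γ r),
      Set.indicator (D r k) (fun _ => (γ r : ℝ) • ∫ y in D r k, f y ∂θ) x) :
    I f = (⨆ r : ℕ, ∫⁻ x, i (fr r x) ∂θ)
      ∧ (∀ r : ℕ, ∫⁻ x, i (fr r x) ∂θ ≤ I f)
      ∧ I f ≤ liminf (fun r => ∫⁻ x, i (fr r x) ∂θ) atTop := by
  have hfi : Integrable f θ := (Lp.memLp f).integrable (by norm_num)
  have hfr' : ∀ r, fr r = blockAvg θ (D r) f := fun r => funext fun x => hfr r x
  have hup : ∀ r : ℕ, ∫⁻ x, i (fr r x) ∂θ ≤ I f := by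
    intro r
    rw [hI, hfr']
    exact blockAvg_jensen θ (D r) (hDmeas r) (hDdisj r) (hDcover r) (hDmeasure r) i hilsc hiconv
      f hfi
  have hlow : I f ≤ liminf (fun r => ∫⁻ x, i (fr r x) ∂θ) atTop := by
    by_contra hcon
    rw [not_le] at hcon
    obtain ⟨c, hc1, hc2⟩ := exists_between hcon
    have hfreq := frequently_lt_of_liminf_lt (by isBoundedDefault) hc1
    obtain ⟨φ, hφ, hφc⟩ := extraction_of_frequently_atTop hfreq
    have hL1 := blockAvg_tendsto_L1 θ γ D hDmeas hDdisj hDcover hDmeasure hDdiam f hfi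
    have hsm : ∀ r, StronglyMeasurable (fr r) := fun r => by
      rw [hfr']; exact blockAvg_meas θ (D r) (hDmeas r) f
    have hm : TendstoInMeasure θ (fun n => fr (φ n)) atTop f := by
      refine tendstoInMeasure_of_tendsto_eLpNorm (p := 1) (by simp)
        (fun n => (hsm _).aestronglyMeasurable) hfi.aestronglyMeasurable ?_
      simp only [eLpNorm_one_eq_lintegral_enorm, hfr']
      exact hL1.comp hφ.tendsto_atTop
    obtain ⟨ns, hns, hae⟩ := hm.exists_seq_tendsto_ae
    have hle : I f ≤ c := by
      rw [hI]
      calc ∫⁻ x, i (f x) ∂θ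
          ≤ ∫⁻ x, liminf (fun n => i (fr (φ (ns n)) x)) atTop ∂θ := by
            refine lintegral_mono_ae ?_
            filter_upwards [hae] with x hx
            refine (hilsc.le_liminf (f x)).trans ?_
            exact hx.liminf_le_liminf_comp
        _ ≤ liminf (fun n => ∫⁻ x, i (fr (φ (ns n)) x) ∂θ) atTop :=
            lintegral_liminf_le fun n => hilsc.measurable.comp (hsm _).measurable
        _ ≤ c := by
            refine liminf_le_of_frequently_le' (Frequently.of_forall fun n => (hφc (ns n)).le)
    exact absurd hc2 (not_lt.2 hle)
  refine ⟨le_antisymm ?_ (iSup_le hup), hup, hlow⟩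
  refine hlow.trans ?_
  refine liminf_le_of_frequently_le' (Frequently.of_forall fun n => ?_)
  exact le_iSup (fun r => ∫⁻ x, i (fr r x) ∂θ) n
end

section
/- Theorem 4.2: assume there exists δ > 0 such that ∫_{ℝ^d} exp(δ|y|²/2) ρ(dy) < ∞. Then for every M < ∞ the level set {f ∈ L²(Λ,θ;ℝ^d) : I(f) ≤ M} is compact with respect to the weak topology on L²(Λ,θ;ℝ^d), where i is the Cramér rate function of ρ and I(f) = ∫_Λ i(f(x)) θ(dx). -/
open MeasureTheory Filter Topology ENNReal

theorem aux_weak_compact {H : Type*} [NormedAddCommGroup H] [InnerProductSpace ℝ H]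
    [CompleteSpace H] (S : Set H) (hconv : Convex ℝ S) (hclosed : IsClosed S)
    (R : ℝ) (hR : ∀ f ∈ S, ‖f‖ ≤ R) :
    @IsCompact H (TopologicalSpace.induced
      (fun f : H => (fun h : H => (inner (𝕜 := ℝ) f h : ℝ))) Pi.topologicalSpace) S := by
  have key : IsCompact ((fun f : H => (fun h : H => (inner (𝕜 := ℝ) f h : ℝ))) ''
      Metric.closedBall 0 R) := by
    have h1 : IsCompact ((fun φ : WeakDual ℝ H => (fun h : H => φ h)) ''
        (WeakDual.toStrongDual ⁻¹' Metric.closedBall (0 : StrongDual ℝ H) R)) :=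
      (WeakDual.isCompact_closedBall (𝕜 := ℝ) (0 : StrongDual ℝ H) R).image
        (continuous_pi fun h => WeakDual.eval_continuous h)
    convert h1 using 1
    ext u
    constructor
    · rintro ⟨f, hf, rfl⟩
      refine ⟨StrongDual.toWeakDual (InnerProductSpace.toDual ℝ H f), ?_, ?_⟩
      · simpa using hf
      · funext h
        simp
    · rintro ⟨φ, hφ, rfl⟩
      refine ⟨(InnerProductSpace.toDual ℝ H).symm (WeakDual.toStrongDual φ), ?_, ?_⟩
      · simpa using hφ
      · funext h
        simp
  have hsep : ∀ f0 : H, f0 ∉ S → ∃ (φ : StrongDual ℝ H) (u : ℝ), φ f0 < u ∧ ∀ b ∈ S, u < φ b :=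
    fun f0 hf0 => geometric_hahn_banach_point_closed hconv hclosed hf0
  let τ : TopologicalSpace H := TopologicalSpace.induced
      (fun f : H => (fun h : H => (inner (𝕜 := ℝ) f h : ℝ))) Pi.topologicalSpace
  have hind : @IsInducing H (H → ℝ) τ _ (fun f : H => (fun h : H => (inner (𝕜 := ℝ) f h : ℝ))) :=
    ⟨rfl⟩
  have hball : @IsCompact H τ (Metric.closedBall 0 R) := hind.isCompact_iff.2 key
  refine @IsCompact.of_isClosed_subset H τ _ _ hball ?_ ?_
  · refine @IsClosed.mk H τ _ ?_
    refine (@isOpen_iff_mem_nhds H τ _).2 ?_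
    intro f0 hf0
    obtain ⟨φ, u, hu0, hu⟩ := hsep f0 hf0
    set h := (InnerProductSpace.toDual ℝ H).symm φ with hh
    have hφ : ∀ f, φ f = inner ℝ f h := by
      intro f
      rw [real_inner_comm, hh, InnerProductSpace.toDual_symm_apply]
    have hcont : @Continuous H ℝ τ _ (fun f => (inner ℝ f h : ℝ)) :=
      (continuous_apply h).comp hind.continuous
    have hopen := (isOpen_Iio (a := u)).preimage hcont
    refine mem_of_superset (hopen.mem_nhds (x := f0) ?_) ?_
    · change inner ℝ f0 h < u
      rw [← hφ]; exact hu0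
    · intro f hf hfS
      have h1 : inner ℝ f h < u := hf
      have h2 := hu f hfS
      rw [hφ] at h2
      linarith
  · intro f hf
    simpa using hR f hf



/-- Theorem 4.2: assume there exists `δ > 0` such that `∫ exp(δ|y|²/2) ρ(dy) < ∞`. Then for
every `M < ∞` the level set `{f ∈ L²(Λ,θ;ℝ^d) : I(f) ≤ M}` is compact with respect to the weak
topology on `L²(Λ,θ;ℝ^d)` (the topology generated by the maps `g ↦ ⟨g,h⟩₂`), where `i` is the
Cramér rate function of `ρ` and `I(f) = ∫_Λ i(f(x)) θ(dx)`. -/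
theorem rate_functional_weakly_compact_level_sets
    {Λ : Type*} [MetricSpace Λ] [TopologicalSpace.SeparableSpace Λ] [CompleteSpace Λ]
    [MeasurableSpace Λ] [BorelSpace Λ]
    (θ : Measure Λ) [IsProbabilityMeasure θ]
    (d : ℕ) (hd : 0 < d)
    (ρ : Measure (EuclideanSpace ℝ (Fin d))) [IsProbabilityMeasure ρ]
    (c : EuclideanSpace ℝ (Fin d) → ℝ)
    (hc : ∀ α, c α =
      Real.log ((∫⁻ y, ENNReal.ofReal (Real.exp (inner (𝕜 := ℝ) α y)) ∂ρ).toReal))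
    (i : EuclideanSpace ℝ (Fin d) → ℝ≥0∞)
    (hi : ∀ z, i z = ⨆ α : EuclideanSpace ℝ (Fin d),
      ENNReal.ofReal ((inner (𝕜 := ℝ) α z : ℝ) - c α))
    (I : Lp (EuclideanSpace ℝ (Fin d)) 2 θ → ℝ≥0∞)
    (hI : ∀ f, I f = ∫⁻ x, i (f x) ∂θ)
    (γ : ℕ → ℕ) (hγpos : ∀ r, 0 < γ r) (hγtop : Tendsto γ atTop atTop)
    (D : (r : ℕ) → Fin (γ r) → Set Λ)
    (hDmeas : ∀ r k, MeasurableSet (D r k))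
    (hDdisj : ∀ r, ∀ k k' : Fin (γ r), k ≠ k' → Disjoint (D r k) (D r k'))
    (hDcover : ∀ r, (⋃ k, D r k) = Set.univ)
    (hDmeasure : ∀ r k, θ (D r k) = 1 / (γ r : ℝ≥0∞))
    (hDdiam : Tendsto (fun r => ⨆ k : Fin (γ r), EMetric.diam (D r k)) atTop (𝓝 0))
    (δ : ℝ) (hδ : 0 < δ)
    (hfin : (∫⁻ y, ENNReal.ofReal (Real.exp (δ / 2 * ‖y‖ ^ 2)) ∂ρ) < ⊤) :
    ∀ M : ℝ≥0∞, M ≠ ⊤ →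
      @IsCompact (Lp (EuclideanSpace ℝ (Fin d)) 2 θ)
        (TopologicalSpace.induced
          (fun f : Lp (EuclideanSpace ℝ (Fin d)) 2 θ =>
            (fun h : Lp (EuclideanSpace ℝ (Fin d)) 2 θ => (inner (𝕜 := ℝ) f h : ℝ)))
          Pi.topologicalSpace)
        {f : Lp (EuclideanSpace ℝ (Fin d)) 2 θ | I f ≤ M} := by
  intro M hM
  have hlsc : LowerSemicontinuous i := by
    have : i = fun z => ⨆ α : EuclideanSpace ℝ (Fin d),
      ENNReal.ofReal ((inner (𝕜 := ℝ) α z : ℝ) - c α) := funext hi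
    rw [this]
    refine lowerSemicontinuous_iSup fun α => Continuous.lowerSemicontinuous ?_
    exact ENNReal.continuous_ofReal.comp (by fun_prop)
  have himeas : Measurable i := hlsc.measurable
  have hfm : ∀ f : Lp (EuclideanSpace ℝ (Fin d)) 2 θ, AEMeasurable (fun x => i (f x)) θ :=
    fun f => himeas.comp_aemeasurable (Lp.aestronglyMeasurable f).aemeasurable
  set C := ∫⁻ y, ENNReal.ofReal (Real.exp (δ / 2 * ‖y‖ ^ 2)) ∂ρ with hC
  have hcb : ∀ α, c α ≤ ‖α‖ ^ 2 / (2 * δ) + C.toReal := by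
    intro α
    have h0 : 0 ≤ ‖α‖ ^ 2 / (2 * δ) + C.toReal := by positivity
    have h1 : (∫⁻ y, ENNReal.ofReal (Real.exp (inner (𝕜 := ℝ) α y)) ∂ρ) ≤
        ENNReal.ofReal (Real.exp (‖α‖ ^ 2 / (2 * δ))) * C := by
      rw [hC, ← lintegral_const_mul' _ _ ENNReal.ofReal_ne_top]
      refine lintegral_mono fun y => ?_
      rw [← ENNReal.ofReal_mul (Real.exp_pos _).le, ← Real.exp_add]
      refine ENNReal.ofReal_le_ofReal (Real.exp_le_exp.2 ?_)
      refine (real_inner_le_norm α y).trans ?_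
      have : ‖α‖ ^ 2 / (2 * δ) + δ / 2 * ‖y‖ ^ 2 - ‖α‖ * ‖y‖ =
          (‖α‖ - δ * ‖y‖) ^ 2 / (2 * δ) := by
        field_simp; ring
      have h2 : 0 ≤ (‖α‖ - δ * ‖y‖) ^ 2 / (2 * δ) := by positivity
      linarith
    have h2 : (∫⁻ y, ENNReal.ofReal (Real.exp (inner (𝕜 := ℝ) α y)) ∂ρ).toReal ≤
        Real.exp (‖α‖ ^ 2 / (2 * δ) + C.toReal) := by
      refine (ENNReal.toReal_mono (ENNReal.mul_ne_top ENNReal.ofReal_ne_top hfin.ne) h1).trans ?_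
      rw [ENNReal.toReal_mul, ENNReal.toReal_ofReal (Real.exp_pos _).le, Real.exp_add]
      gcongr
      linarith [Real.add_one_le_exp C.toReal]
    rw [hc]
    rcases (ENNReal.toReal_nonneg (a := ∫⁻ y, ENNReal.ofReal (Real.exp (inner (𝕜 := ℝ) α y)) ∂ρ)).eq_or_lt with h | h
    · rw [← h, Real.log_zero]; exact h0
    · exact (Real.log_le_iff_le_exp h).2 h2
  have hcoer : ∀ z, ENNReal.ofReal (δ / 2 * ‖z‖ ^ 2) ≤ i z + ENNReal.ofReal C.toReal := by
    intro z
    have h1 : ENNReal.ofReal (δ / 2 * ‖z‖ ^ 2 - C.toReal) ≤ i z := by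
      rw [hi]
      refine le_trans (ENNReal.ofReal_le_ofReal ?_) (le_iSup
        (fun α : EuclideanSpace ℝ (Fin d) => ENNReal.ofReal (inner ℝ α z - c α)) (δ • z))
      have := hcb (δ • z)
      rw [norm_smul, Real.norm_of_nonneg hδ.le] at this
      rw [inner_smul_left, real_inner_self_eq_norm_sq]
      have e : (δ * ‖z‖) ^ 2 / (2 * δ) = δ / 2 * ‖z‖ ^ 2 := by field_simp
      simp only [conj_trivial]
      linarith
    calc ENNReal.ofReal (δ / 2 * ‖z‖ ^ 2)
        = ENNReal.ofReal ((δ / 2 * ‖z‖ ^ 2 - C.toReal) + C.toReal) := by ring_nf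
      _ ≤ _ := ENNReal.ofReal_add_le
      _ ≤ _ := by gcongr
  have hbd : ∀ f : Lp (EuclideanSpace ℝ (Fin d)) 2 θ, I f ≤ M →
      ‖f‖ ≤ Real.sqrt (2 / δ * (M.toReal + C.toReal)) := by
    intro f hf
    refine Real.le_sqrt_of_sq_le ?_
    rw [← real_inner_self_eq_norm_sq, L2.inner_def]
    have hint : (∫ x, inner ℝ (f x) (f x) ∂θ) = (∫⁻ x, ENNReal.ofReal (‖f x‖ ^ 2) ∂θ).toReal := by
      simp_rw [real_inner_self_eq_norm_sq]
      refine integral_eq_lintegral_of_nonneg_ae (ae_of_all _ fun x => by positivity) ?_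
      exact (Lp.aestronglyMeasurable f).norm.pow 2
    rw [hint]
    have h1 : ENNReal.ofReal (δ / 2) * (∫⁻ x, ENNReal.ofReal (‖f x‖ ^ 2) ∂θ) ≤
        M + ENNReal.ofReal C.toReal := by
      rw [← lintegral_const_mul' _ _ ENNReal.ofReal_ne_top]
      calc _ ≤ ∫⁻ x, (i (f x) + ENNReal.ofReal C.toReal) ∂θ := by
            refine lintegral_mono fun x => ?_
            rw [← ENNReal.ofReal_mul (by positivity)]
            exact hcoer _
        _ = I f + ENNReal.ofReal C.toReal := by
            rw [lintegral_add_left' (hfm f), hI]; simp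
        _ ≤ _ := by gcongr
    have h2 := ENNReal.toReal_mono (ENNReal.add_ne_top.2 ⟨hM, ENNReal.ofReal_ne_top⟩) h1
    rw [ENNReal.toReal_mul, ENNReal.toReal_ofReal (by positivity),
      ENNReal.toReal_add hM ENNReal.ofReal_ne_top,
      ENNReal.toReal_ofReal ENNReal.toReal_nonneg] at h2
    rw [div_mul_eq_mul_div, le_div_iff₀ hδ]
    linarith
  have hiconv : ∀ (a b : ℝ), 0 ≤ a → 0 ≤ b → a + b = 1 → ∀ x y,
      i (a • x + b • y) ≤ ENNReal.ofReal a * i x + ENNReal.ofReal b * i y := by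
    intro a b ha hb hab x y
    rw [hi (a • x + b • y)]
    refine iSup_le fun α => ?_
    have e : inner ℝ α (a • x + b • y) - c α =
        a * (inner ℝ α x - c α) + b * (inner ℝ α y - c α) := by
      rw [inner_add_right, inner_smul_right, inner_smul_right]
      linear_combination (c α) * hab
    rw [e]
    refine ENNReal.ofReal_add_le.trans ?_
    rw [ENNReal.ofReal_mul ha, ENNReal.ofReal_mul hb, hi x, hi y]
    gcongr
    · exact le_iSup (fun α => ENNReal.ofReal (inner ℝ α x - c α)) α
    · exact le_iSup (fun α => ENNReal.ofReal (inner ℝ α y - c α)) α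
  refine aux_weak_compact _ ?_ ?_ _ hbd
  · intro f hf g hg a b ha hb hab
    simp only [Set.mem_setOf_eq] at hf hg ⊢
    rw [hI]
    calc ∫⁻ x, i ((a • f + b • g : Lp (EuclideanSpace ℝ (Fin d)) 2 θ) x) ∂θ
        ≤ ∫⁻ x, (ENNReal.ofReal a * i (f x) + ENNReal.ofReal b * i (g x)) ∂θ := by
          refine lintegral_mono_ae ?_
          filter_upwards [Lp.coeFn_add (a • f) (b • g), Lp.coeFn_smul a f, Lp.coeFn_smul b g]
            with x h1 h2 h3
          rw [h1, Pi.add_apply, h2, h3]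
          exact hiconv a b ha hb hab _ _
      _ = ENNReal.ofReal a * I f + ENNReal.ofReal b * I g := by
          rw [lintegral_add_left' ((hfm f).const_mul _),
            lintegral_const_mul' _ _ ENNReal.ofReal_ne_top,
            lintegral_const_mul' _ _ ENNReal.ofReal_ne_top, hI, hI]
      _ ≤ ENNReal.ofReal a * M + ENNReal.ofReal b * M := by gcongr
      _ = M := by
          rw [← add_mul, ← ENNReal.ofReal_add ha hb, hab]; simp
  · refine IsSeqClosed.isClosed ?_
    intro u f hu hlim
    simp only [Set.mem_setOf_eq] at hu ⊢
    obtain ⟨ns, hns, hae⟩ := (tendstoInMeasure_of_tendsto_Lp hlim).exists_seq_tendsto_ae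
    rw [hI]
    calc ∫⁻ x, i (f x) ∂θ ≤ ∫⁻ x, liminf (fun n => i (u (ns n) x)) atTop ∂θ := by
          refine lintegral_mono_ae ?_
          filter_upwards [hae] with x hx
          refine le_of_forall_lt fun t ht => ?_
          obtain ⟨s, hts, hs⟩ := exists_between ht
          refine hts.trans_le (le_liminf_of_le (by isBoundedDefault) ?_)
          exact (hx.eventually (hlsc (f x) s hs)).mono fun n hn => hn.le
      _ ≤ liminf (fun n => ∫⁻ x, i (u (ns n) x) ∂θ) atTop :=
          lintegral_liminf_le' fun n => hfm _
      _ ≤ liminf (fun n : ℕ => M) atTop :=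
          liminf_le_liminf (Eventually.of_forall fun n => by
            change ∫⁻ x, i (u (ns n) x) ∂θ ≤ M
            rw [← hI]; exact hu _)
      _ = M := liminf_const M
end
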